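/- Let H_n be the physicists' Hermite polynomials, D = {d_1 < … < d_M} a finite set of positive integers, and N ∈ ℕ with N ∉ D. Set Ξ_D = W[H_{d_1},…,H_{d_M}] and Q = P_{D,N} = W[H_{d_1},…,H_{d_M},H_N]. Fix j ∈ {1,…,M} and ε ∈ {0,…,d_j−1} \ D, and let Ξ_{D′} = W[H_{d_1},…,H_{d_{j−1}},H_ε,H_{d_{j+1}},…,H_{d_M}] and P_{D′,N} = W[H_{d_1},…,H_{d_{j−1}},H_ε,H_{d_{j+1}},…,H_{d_M},H_N]. Set Ẽ = 2(d_j + ε − N) and E″ = 4(N − d_j). Then the following identity holds in ℝ[X]: Ξ_{D′}·(−Q″ + 2·X·Q′) + 2·(Ξ_{D′})′·Q′ − (Ξ_{D′})″·Q − 2·X·(Ξ_{D′})′·Q + (2M − Ẽ)·Ξ_{D′}·Q = E″·P_{D′,N}·Ξ_D, where ′ and ″ denote first and second polynomial derivatives. -/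

import Mathlib

/-!
Let `S` be the seeds other than the exchanged one, `w = W[S]`, and let `A`, `E`, `H` be the
Wronskians of `S` followed by the old seed, by the new seed and by `H_N`. As an operator in `f`,
`W[S, f] = w f⁽ᵐ⁾ - w′ f⁽ᵐ⁻¹⁾ + ⋯`, and it kills the `m` members of `S`. An operator of order less
than `m` that kills `m` functions with nonzero Wronskian is zero, so an identity between operators
that kill `S` only has to be checked modulo operators of order less than `m`. This gives both

* Jacobi's identity `W[S] W[S, a, f] = W[W[S, a], W[S, f]]`, and
* Crum's theorem: if the members of `S` are eigenfunctions of `T = ∂² + p ∂ + q`, then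
  `f ↦ W[S, f] / W[S]` intertwines `T` with `T + 2 (log W[S])″ + m p′`.

They reduce the exchange of a seed to the exchange of the single seed `A / w` for `E / w`, which is
a computation with the three eigenvalue equations of `A`, `E`, `H` over `w`. Hermite seeds of
distinct degrees have a nonzero Wronskian because its leading coefficient is, up to a nonzero
factor, a Vandermonde determinant.
-/

open Polynomial

/-- The physicists' Hermite polynomials: `H_0 = 1`, `H_{n+1} = 2·X·H_n − H_n′`. -/
noncomputable def hermiteP : ℕ → Polynomial ℝ
  | 0 => 1
  | n + 1 => 2 * Polynomial.X * hermiteP n - Polynomial.derivative (hermiteP n)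

/-- The Wronskian `W[f_1,…,f_m]`: determinant of the matrix whose `(i,j)` entry is the
`i`-th derivative of `f j` (indices starting from `0`). -/
noncomputable def wronskian {m : ℕ} (f : Fin m → Polynomial ℝ) : Polynomial ℝ :=
  (Matrix.of fun i j : Fin m => Polynomial.derivative^[(i : ℕ)] (f j)).det

/-- The Krein–Adler polynomial `P_{D,n} = W[H_{d_1},…,H_{d_M},H_n]` based on the
physicists' Hermite polynomials. -/
noncomputable def KAHermite {M : ℕ} (d : Fin M → ℕ) (n : ℕ) : Polynomial ℝ :=
  wronskian (Fin.snoc (fun j => hermiteP (d j)) (hermiteP n))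

/-- The denominator polynomial `Ξ_D = W[H_{d_1},…,H_{d_M}]`. -/
noncomputable def XiHermite {M : ℕ} (d : Fin M → ℕ) : Polynomial ℝ :=
  wronskian (fun j => hermiteP (d j))

lemma insertNth_castSucc_snoc {α : Type*} {m : ℕ} (j : Fin (m + 1)) (x y : α) (S : Fin m → α) :
    (Fin.snoc (j.insertNth x S : Fin (m + 1) → α) y : Fin (m + 2) → α) =
      j.castSucc.insertNth x (Fin.snoc S y : Fin (m + 1) → α) := by
  refine Fin.eq_insertNth_iff.mpr ⟨by simp, ?_⟩
  ext i
  refine Fin.lastCases ?_ (fun i => ?_) i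
  · simp [Fin.removeNth]
  · simp [Fin.removeNth]

section Derivation

variable {k A : Type*} [CommRing k] [CommRing A] [Algebra k A] (δ : Derivation k A A)

lemma derivation_prod {ι : Type*} [DecidableEq ι] (s : Finset ι) (f : ι → A) :
    δ (∏ i ∈ s, f i) = ∑ i ∈ s, δ (f i) * ∏ l ∈ s.erase i, f l := by
  induction s using Finset.induction_on with
  | empty => simp
  | insert a s ha ih =>
    have hs : ∀ i ∈ s, δ (f i) * ∏ l ∈ (insert a s).erase i, f l =
        f a * (δ (f i) * ∏ l ∈ s.erase i, f l) := fun i hi => by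
      rw [Finset.erase_insert_of_ne (ne_of_mem_of_not_mem hi ha).symm,
        Finset.prod_insert fun h => ha (Finset.mem_of_mem_erase h)]
      ring
    rw [Finset.prod_insert ha, Finset.sum_insert ha, Finset.erase_insert ha,
      Finset.sum_congr rfl hs, ← Finset.mul_sum, ← ih, Derivation.leibniz, smul_eq_mul,
      smul_eq_mul]
    ring

lemma derivation_det {n : Type*} [Fintype n] [DecidableEq n] (M : Matrix n n A) :
    δ M.det = ∑ r, (M.updateRow r fun c => δ (M r c)).det := by
  simp only [Matrix.det_apply]
  rw [map_sum, Finset.sum_comm]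
  refine Finset.sum_congr rfl fun σ _ => ?_
  have hrow : ∀ c, ∏ l, M.updateRow (σ c) (fun c' => δ (M (σ c) c')) (σ l) l =
      δ (M (σ c) c) * ∏ l ∈ Finset.univ.erase c, M (σ l) l := fun c => by
    rw [← Finset.mul_prod_erase _ _ (Finset.mem_univ c), Matrix.updateRow_self]
    congr 1
    exact Finset.prod_congr rfl fun l hl => by
      rw [Matrix.updateRow_ne (σ.injective.ne (Finset.ne_of_mem_erase hl))]
  rw [Units.smul_def, map_zsmul, derivation_prod, ← Finset.smul_sum, ← Units.smul_def,
    ← Equiv.sum_comp σ fun r => ∏ l, M.updateRow r (fun c => δ (M r c)) (σ l) l]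
  simp only [hrow]

/-- Linear differential operators `∑_{i < n} g_i δ^i` of order less than `n`. They form an
`A`-submodule of all maps `A → A`, so that identities between operators can be proved modulo
operators of lower order. -/
def diffOpLT (n : ℕ) : Submodule A (A → A) :=
  Submodule.span A (Set.range fun i : Fin n => δ^[i])

variable {δ}

lemma iterate_mem_diffOpLT {i n : ℕ} (h : i < n) : δ^[i] ∈ diffOpLT δ n :=
  Submodule.subset_span ⟨⟨i, h⟩, rfl⟩

lemma diffOpLT_mono {m n : ℕ} (h : m ≤ n) : diffOpLT δ m ≤ diffOpLT δ n :=
  Submodule.span_le.mpr <| by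
    rintro _ ⟨i, rfl⟩
    exact iterate_mem_diffOpLT (i.2.trans_le h)

lemma derivation_comp_mem_diffOpLT {n : ℕ} {Z : A → A} (hZ : Z ∈ diffOpLT δ n) :
    δ ∘ Z ∈ diffOpLT δ (n + 1) := by
  induction hZ using Submodule.span_induction with
  | mem _ h =>
    obtain ⟨i, rfl⟩ := h
    rw [← Function.iterate_succ']
    exact iterate_mem_diffOpLT (by omega)
  | zero =>
    convert zero_mem (diffOpLT δ (n + 1)) using 1
    ext f
    simp
  | add Y Z _ _ hY hZ =>
    convert add_mem hY hZ using 1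
    ext f
    simp
  | smul a Z hZ ih =>
    convert add_mem (Submodule.smul_mem _ a ih)
      (Submodule.smul_mem _ (δ a) (diffOpLT_mono n.le_succ hZ)) using 1
    ext f
    simp [mul_comm]

lemma iterate_derivation_mul_mem_diffOpLT (a : A) (n : ℕ) :
    (fun f => δ^[n] (a * f) - a * δ^[n] f) ∈ diffOpLT δ n := by
  induction n with
  | zero =>
    convert zero_mem (diffOpLT δ 0) using 1
    ext f
    simp
  | succ n ih =>
    convert add_mem (derivation_comp_mem_diffOpLT ih)
      (Submodule.smul_mem _ (δ a) (iterate_mem_diffOpLT n.lt_succ_self)) using 1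
    ext f
    simp only [Function.iterate_succ_apply', Function.comp_apply, Pi.add_apply, Pi.smul_apply,
      map_sub, Derivation.leibniz, smul_eq_mul]
    ring

lemma iterate_derivation_mul_derivation_mem_diffOpLT (a : A) (n : ℕ) :
    (fun f => δ^[n] (a * δ f) - a * δ^[n + 1] f - n * δ a * δ^[n] f) ∈ diffOpLT δ n := by
  induction n with
  | zero =>
    convert zero_mem (diffOpLT δ 0) using 1
    ext f
    simp
  | succ n ih =>
    convert add_mem (derivation_comp_mem_diffOpLT ih)
      (Submodule.smul_mem _ (n * δ (δ a)) (iterate_mem_diffOpLT n.lt_succ_self)) using 1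
    ext f
    simp only [Function.iterate_succ_apply', Function.comp_apply, Pi.add_apply, Pi.smul_apply,
      map_sub, Derivation.leibniz, Derivation.map_natCast, smul_eq_mul]
    push_cast
    ring

variable (δ) in
/-- The second-order operator `δ² + p δ + q`. -/
def secondOrderOp (p q f : A) : A := δ (δ f) + p * δ f + q * f

lemma secondOrderOp_iterate_commutator_mem_diffOpLT (p q : A) (n : ℕ) :
    (fun f => secondOrderOp δ p q (δ^[n] f) - δ^[n] (secondOrderOp δ p q f) +
      n * δ p * δ^[n] f) ∈ diffOpLT δ n := by
  convert neg_mem (add_mem (iterate_derivation_mul_derivation_mem_diffOpLT p n)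
    (iterate_derivation_mul_mem_diffOpLT q n)) using 1
  ext f
  simp only [secondOrderOp, iterate_map_add, ← Function.iterate_succ_apply,
    ← Function.iterate_succ_apply' δ, Pi.neg_apply, Pi.add_apply]
  ring

lemma secondOrderOp_commutator_mem_diffOpLT (p q : A) {n : ℕ} {Z : A → A}
    (hZ : Z ∈ diffOpLT δ n) :
    (fun f => secondOrderOp δ p q (Z f) - Z (secondOrderOp δ p q f)) ∈ diffOpLT δ (n + 1) := by
  induction hZ using Submodule.span_induction with
  | mem _ h =>
    obtain ⟨⟨i, hi⟩, rfl⟩ := h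
    convert sub_mem
      (diffOpLT_mono (by omega) (secondOrderOp_iterate_commutator_mem_diffOpLT p q i))
      (Submodule.smul_mem _ (i * δ p) (iterate_mem_diffOpLT (by omega : i < n + 1))) using 1
    ext f
    simp
  | zero =>
    convert zero_mem (diffOpLT δ (n + 1)) using 1
    ext f
    simp [secondOrderOp]
  | add Y Z _ _ hY hZ =>
    convert add_mem hY hZ using 1
    ext f
    simp only [secondOrderOp, Pi.add_apply, map_add]
    ring
  | smul a Z hZ ih =>
    convert add_mem (add_mem (Submodule.smul_mem _ a ih)
      (Submodule.smul_mem _ (2 * δ a) (derivation_comp_mem_diffOpLT hZ)))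
      (Submodule.smul_mem _ (δ (δ a) + p * δ a) (diffOpLT_mono n.le_succ hZ)) using 1
    ext f
    simp only [secondOrderOp, Pi.add_apply, Pi.smul_apply, Function.comp_apply, map_add,
      Derivation.leibniz, smul_eq_mul]
    ring

/-- The Wronskian `W[f_1, …, f_m]` with respect to an arbitrary derivation. -/
def wronskianOf (δ : Derivation k A A) {m : ℕ} (f : Fin m → A) : A :=
  (Matrix.of fun i j : Fin m => δ^[i] (f j)).det

lemma wronskianOf_snoc_self {m : ℕ} (S : Fin m → A) (j : Fin m) :
    wronskianOf δ (Fin.snoc S (S j)) = 0 :=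
  Matrix.det_zero_of_column_eq (Fin.castSucc_lt_last j).ne fun i => by simp

lemma wronskianOf_insertNth {m : ℕ} (j : Fin (m + 1)) (S : Fin m → A) (f : A) :
    wronskianOf δ (j.insertNth f S : Fin (m + 1) → A) =
      (-1 : k) ^ (j + m : ℕ) • wronskianOf δ (Fin.snoc S f) := by
  have hsign (i : ℕ) :
      (-1 : A) ^ (i + j : ℕ) = (-1) ^ (j + m : ℕ) * (-1) ^ (i + m) := by
    rw [← pow_add, show (j + m + (i + m) : ℕ) = i + j + 2 * m by ring, pow_add _ _ (2 * m),
      pow_mul]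
    simp
  rw [wronskianOf, wronskianOf, Matrix.det_succ_column _ j, Matrix.det_succ_column _ (Fin.last m),
    Algebra.smul_def, Finset.mul_sum]
  refine Finset.sum_congr rfl fun i _ => ?_
  simp [hsign, Matrix.submatrix, mul_assoc]

lemma det_iterate_snoc {m : ℕ} (e : Fin (m + 1) → ℕ) (S : Fin m → A) (f : A) :
    (Matrix.of fun i j => δ^[e i] ((Fin.snoc S f : Fin (m + 1) → A) j)).det =
      ∑ i : Fin (m + 1), (-1) ^ (i + m : ℕ) *
        (Matrix.of fun r c => δ^[e (i.succAbove r)] (S c)).det * δ^[e i] f := by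
  rw [Matrix.det_succ_column _ (Fin.last m)]
  refine Finset.sum_congr rfl fun i _ => ?_
  simp [Matrix.submatrix, mul_right_comm]

lemma wronskianOf_snoc {m : ℕ} (S : Fin m → A) (f : A) :
    wronskianOf δ (Fin.snoc S f) = ∑ i : Fin (m + 1),
      (-1) ^ (i + m : ℕ) * (Matrix.of fun r c => δ^[(i.succAbove r : ℕ)] (S c)).det *
        δ^[i] f :=
  det_iterate_snoc Fin.val S f

lemma wronskianOf_snoc_smul {m : ℕ} (S : Fin m → A) (c : k) (f : A) :
    wronskianOf δ (Fin.snoc S (c • f)) = c • wronskianOf δ (Fin.snoc S f) := by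
  have hδ : ∀ i, δ^[i] (c • f) = c • δ^[i] f := fun i =>
    Function.Commute.iterate_left (δ.map_smul c) i f
  simp only [wronskianOf_snoc, hδ, mul_smul_comm, Finset.smul_sum]

lemma derivation_wronskianOf {n : ℕ} (S : Fin (n + 1) → A) :
    δ (wronskianOf δ S) = (Matrix.of fun r c : Fin (n + 1) =>
      δ^[((Fin.last n).castSucc.succAbove r : ℕ)] (S c)).det := by
  rw [wronskianOf, derivation_det, Fin.sum_univ_castSucc, Finset.sum_eq_zero, zero_add]
  · congr 1
    ext r c
    refine Fin.lastCases ?_ (fun i => ?_) r <;>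
      simp [Matrix.updateRow_apply, Fin.succAbove_of_castSucc_lt, Function.iterate_succ_apply']
  · -- Differentiating any row but the last makes it equal to the next one.
    intro i _
    refine Matrix.det_zero_of_row_eq (Fin.castSucc_lt_succ (i := i)).ne ?_
    ext c
    simp [Matrix.updateRow_apply, Function.iterate_succ_apply', Fin.ext_iff]

lemma det_iterate_snoc_sub_mem_diffOpLT {m : ℕ} {e : Fin (m + 1) → ℕ}
    (he : ∀ i : Fin m, e i.castSucc = i) (S : Fin m → A) :
    (fun f => (Matrix.of fun i j => δ^[e i] ((Fin.snoc S f : Fin (m + 1) → A) j)).det -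
      wronskianOf δ S * δ^[e (Fin.last m)] f) ∈ diffOpLT δ m := by
  convert sum_mem (t := Finset.univ) fun (i : Fin m) _ => Submodule.smul_mem _
    ((-1) ^ (i + m : ℕ) * (Matrix.of fun r c => δ^[e (i.castSucc.succAbove r)] (S c)).det)
    (iterate_mem_diffOpLT (δ := δ) i.2) using 1
  ext f
  simp [det_iterate_snoc, Fin.sum_univ_castSucc, he, wronskianOf]

lemma wronskianOf_snoc_sub_mem_diffOpLT {m : ℕ} (S : Fin m → A) :
    (fun f => wronskianOf δ (Fin.snoc S f) - wronskianOf δ S * δ^[m] f) ∈ diffOpLT δ m :=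
  det_iterate_snoc_sub_mem_diffOpLT (e := Fin.val) (fun _ => rfl) S

lemma derivation_wronskianOf_snoc_sub_mem_diffOpLT {m : ℕ} (S : Fin m → A) :
    (fun f => δ (wronskianOf δ (Fin.snoc S f)) - wronskianOf δ S * δ^[m + 1] f) ∈
      diffOpLT δ m := by
  simp only [derivation_wronskianOf]
  convert det_iterate_snoc_sub_mem_diffOpLT
    (e := fun r => ((Fin.last m).castSucc.succAbove r : ℕ)) (fun i => ?_) S using 1
  · simp
  · simp [Fin.succAbove_of_castSucc_lt]

lemma wronskianOf_snoc_sub_add_mem_diffOpLT {n : ℕ} (S : Fin (n + 1) → A) :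
    (fun f => wronskianOf δ (Fin.snoc S f) - wronskianOf δ S * δ^[n + 1] f +
      δ (wronskianOf δ S) * δ^[n] f) ∈ diffOpLT δ n := by
  convert sum_mem (t := Finset.univ) fun (i : Fin n) _ => Submodule.smul_mem _
    ((-1) ^ (i + (n + 1) : ℕ) *
      (Matrix.of fun r c => δ^[(i.castSucc.castSucc.succAbove r : ℕ)] (S c)).det)
    (iterate_mem_diffOpLT (δ := δ) i.2) using 1
  ext f
  simp only [wronskianOf_snoc, derivation_wronskianOf, Fin.sum_univ_castSucc]
  simp [wronskianOf, ← add_assoc, pow_succ]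

lemma eq_zero_of_mem_diffOpLT [IsDomain A] {m : ℕ} {Z : A → A} (hZ : Z ∈ diffOpLT δ m)
    {S : Fin m → A} (hS : wronskianOf δ S ≠ 0) (hker : ∀ j, Z (S j) = 0) : Z = 0 := by
  obtain ⟨g, rfl⟩ := (Submodule.mem_span_range_iff_exists_fun A).mp hZ
  have hg : g = 0 := Matrix.eq_zero_of_vecMul_eq_zero hS <| funext fun j => by
    simpa [Matrix.vecMul, dotProduct] using hker j
  simp [hg]

variable (δ) in
/-- `w² T_w (y / w)` with the denominators cleared, where `T_w = δ² + p δ + q + 2 (log w)″` is the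
Darboux transform of `T = δ² + p δ + q` by `w`. -/
def darbouxForm (p q w y : A) : A :=
  w * δ (δ y) - 2 * δ w * δ y + δ (δ w) * y + p * (w * δ y - δ w * y) + q * w * y

lemma darbouxForm_smul_smul (p q : A) (c d : k) (w y : A) :
    darbouxForm δ p q (c • w) (d • y) = (c * d) • darbouxForm δ p q w y := by
  simp only [darbouxForm, Derivation.map_smul]
  simp only [Algebra.smul_def, map_mul]
  ring

section Domain

variable [IsDomain A]

lemma wronskianOf_mul_wronskianOf_snoc_snoc {m : ℕ} {S : Fin m → A} (hS : wronskianOf δ S ≠ 0)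
    (a f : A) :
    wronskianOf δ S * wronskianOf δ (Fin.snoc (Fin.snoc S a : Fin (m + 1) → A) f) =
      wronskianOf δ (Fin.snoc S a) * δ (wronskianOf δ (Fin.snoc S f)) -
        δ (wronskianOf δ (Fin.snoc S a)) * wronskianOf δ (Fin.snoc S f) := by
  set w := wronskianOf δ S
  set u := wronskianOf δ (Fin.snoc S a : Fin (m + 1) → A)
  let Z : A → A := fun f => w * wronskianOf δ (Fin.snoc (Fin.snoc S a : Fin (m + 1) → A) f) -
    (u * δ (wronskianOf δ (Fin.snoc S f)) - δ u * wronskianOf δ (Fin.snoc S f))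
  have hZ : Z ∈ diffOpLT δ m := by
    convert add_mem (sub_mem
      (Submodule.smul_mem _ w (wronskianOf_snoc_sub_add_mem_diffOpLT (Fin.snoc S a)))
      (Submodule.smul_mem _ u (derivation_wronskianOf_snoc_sub_mem_diffOpLT S)))
      (Submodule.smul_mem _ (δ u) (wronskianOf_snoc_sub_mem_diffOpLT S)) using 1
    ext f
    simp only [Z, Pi.add_apply, Pi.sub_apply, Pi.smul_apply, smul_eq_mul]
    ring
  have hker (j : Fin m) : Z (S j) = 0 := by
    have hj := wronskianOf_snoc_self (δ := δ) (Fin.snoc S a : Fin (m + 1) → A) j.castSucc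
    rw [Fin.snoc_castSucc] at hj
    simp [Z, hj, wronskianOf_snoc_self]
  exact sub_eq_zero.mp (congrFun (eq_zero_of_mem_diffOpLT hZ hS hker) f)

lemma darbouxForm_wronskianOf_snoc {m : ℕ} {S : Fin m → A} (hS : wronskianOf δ S ≠ 0) {p q : A}
    {μ : Fin m → k} (hμ : ∀ j, secondOrderOp δ p q (S j) = μ j • S j) (f : A) :
    darbouxForm δ p (q + m * δ p) (wronskianOf δ S) (wronskianOf δ (Fin.snoc S f)) =
      wronskianOf δ S * wronskianOf δ (Fin.snoc S (secondOrderOp δ p q f)) := by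
  rcases m with _ | n
  · have hsnoc (g : A) : (Fin.snoc S g : Fin 1 → A) 0 = g :=
      Fin.snoc_last (α := fun _ => A) g S
    simp [darbouxForm, wronskianOf, secondOrderOp, hsnoc]
  set w := wronskianOf δ S
  let W : A → A := fun f => wronskianOf δ (Fin.snoc S f)
  let Z : A → A := fun f => darbouxForm δ p (q + (n + 1 : ℕ) * δ p) w (W f) -
    w * W (secondOrderOp δ p q f)
  have hZ : Z ∈ diffOpLT δ (n + 1) := by
    -- `[T, W] = [T, w δ^(n+1)] - [T, w′ δ^n] + [T, R]`, where `R` has order less than `n`.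
    have hR := secondOrderOp_commutator_mem_diffOpLT p q
      (wronskianOf_snoc_sub_add_mem_diffOpLT (δ := δ) S)
    convert add_mem (add_mem (sub_mem (Submodule.smul_mem _ w hR)
      (Submodule.smul_mem _ (2 * δ w) (derivation_wronskianOf_snoc_sub_mem_diffOpLT S)))
      (Submodule.smul_mem _ (δ (δ w) - p * δ w + (n + 1) * δ p * w)
        (wronskianOf_snoc_sub_mem_diffOpLT S)))
      (sub_mem (Submodule.smul_mem _ (w ^ 2)
        (secondOrderOp_iterate_commutator_mem_diffOpLT p q (n + 1)))
      (add_mem (Submodule.smul_mem _ (w * δ w)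
        (diffOpLT_mono n.le_succ (secondOrderOp_iterate_commutator_mem_diffOpLT p q n)))
      (Submodule.smul_mem _ (w * (δ (δ (δ w)) + p * δ (δ w) - n * δ p * δ w))
        (iterate_mem_diffOpLT n.lt_succ_self)))) using 1
    ext f
    simp only [Z, W, w, darbouxForm, secondOrderOp, Function.iterate_succ_apply', Pi.add_apply,
      Pi.sub_apply, Pi.smul_apply, smul_eq_mul, map_add, map_sub, Derivation.leibniz]
    push_cast
    ring
  have hker (j : Fin (n + 1)) : Z (S j) = 0 := by
    simp [Z, W, hμ, wronskianOf_snoc_smul, wronskianOf_snoc_self, darbouxForm]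
  exact sub_eq_zero.mp (congrFun (eq_zero_of_mem_diffOpLT hZ hS hker) f)

lemma darbouxForm_wronskianOf_snoc_eigen {m : ℕ} {S : Fin m → A} (hS : wronskianOf δ S ≠ 0)
    {p q : A} {μ : Fin m → k} (hμ : ∀ j, secondOrderOp δ p q (S j) = μ j • S j) {f : A} {c : k}
    (hf : secondOrderOp δ p q f = c • f) :
    darbouxForm δ p (q + m * δ p) (wronskianOf δ S) (wronskianOf δ (Fin.snoc S f)) =
      c • (wronskianOf δ S * wronskianOf δ (Fin.snoc S f)) := by
  rw [darbouxForm_wronskianOf_snoc hS hμ, hf, wronskianOf_snoc_smul, mul_smul_comm]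

lemma mul_derivation_eq_of_darbouxForm {w u v y p r : A} {a b : k} (hw : w ≠ 0)
    (hu : darbouxForm δ p r w u = a • (w * u)) (hv : darbouxForm δ p r w v = b • (w * v))
    (hy : w * y = v * δ u - δ v * u) :
    w * δ y = δ w * y - p * w * y + (a - b) • (u * v) := by
  have hy' := congrArg δ hy
  simp only [darbouxForm, Algebra.smul_def, map_sub, Derivation.leibniz] at *
  apply mul_left_cancel₀ hw
  linear_combination w * hy' + v * hu - u * hv + (-2 * δ w + p * w) * hy

lemma darbouxForm_eq_of_darbouxForm {w u x v y z p r : A} {a e b : k} (hw : w ≠ 0)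
    (hu : darbouxForm δ p r w u = a • (w * u)) (hx : darbouxForm δ p r w x = e • (w * x))
    (hv : darbouxForm δ p r w v = b • (w * v))
    (hy : w * y = v * δ u - δ v * u) (hz : w * z = v * δ x - δ v * x) :
    darbouxForm δ p (r + δ p) x y = (a + e - b) • (x * y) + (2 * (b - a)) • (z * u) := by
  have hδy := mul_derivation_eq_of_darbouxForm hw hu hv hy
  have hδδy := congrArg δ hδy
  simp only [darbouxForm, Algebra.smul_def, map_add, map_sub, map_mul, map_ofNat,
    Derivation.leibniz, Derivation.map_algebraMap] at *
  apply mul_left_cancel₀ hw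
  linear_combination x * hδδy - 2 * δ x * hδy + y * hx -
    (algebraMap k A a - algebraMap k A b) * x * hy +
    2 * (algebraMap k A a - algebraMap k A b) * u * hz

lemma darbouxForm_wronskianOf_exchange {m : ℕ} {φ : Fin (m + 1) → A} {j : Fin (m + 1)}
    (hW : wronskianOf δ (j.removeNth φ) ≠ 0) {p q : A} {a : Fin (m + 1) → k}
    (hφ : ∀ i, secondOrderOp δ p q (φ i) = a i • φ i) {χ ψ : A} {e b : k}
    (hχ : secondOrderOp δ p q χ = e • χ) (hψ : secondOrderOp δ p q ψ = b • ψ) :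
    darbouxForm δ p (q + (m + 1 : ℕ) * δ p) (wronskianOf δ (Function.update φ j χ))
        (wronskianOf δ (Fin.snoc φ ψ)) =
      (a j + e - b) • (wronskianOf δ (Function.update φ j χ) * wronskianOf δ (Fin.snoc φ ψ)) +
      (2 * (b - a j)) •
        (wronskianOf δ (Fin.snoc (Function.update φ j χ) ψ) * wronskianOf δ φ) := by
  set S := j.removeNth φ
  have hμ (i) : secondOrderOp δ p q (S i) = a (j.succAbove i) • S i := hφ _
  have key := darbouxForm_eq_of_darbouxForm hW
    (darbouxForm_wronskianOf_snoc_eigen hW hμ (hφ j))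
    (darbouxForm_wronskianOf_snoc_eigen hW hμ hχ) (darbouxForm_wronskianOf_snoc_eigen hW hμ hψ)
    (wronskianOf_mul_wronskianOf_snoc_snoc hW ψ (φ j))
    (wronskianOf_mul_wronskianOf_snoc_snoc hW ψ χ)
  have hE : wronskianOf δ (Function.update φ j χ) =
      (-1 : k) ^ (j + m : ℕ) • wronskianOf δ (Fin.snoc S χ) := by
    rw [← Fin.insertNth_removeNth, wronskianOf_insertNth]
  have hA : wronskianOf δ φ = (-1 : k) ^ (j + m : ℕ) • wronskianOf δ (Fin.snoc S (φ j)) := by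
    rw [← wronskianOf_insertNth, Fin.insertNth_self_removeNth]
  have hQ : wronskianOf δ (Fin.snoc φ ψ) = (-1 : k) ^ (j + (m + 1) : ℕ) •
      wronskianOf δ (Fin.snoc (Fin.snoc S ψ : Fin (m + 1) → A) (φ j)) := by
    rw [← Fin.val_castSucc j, ← wronskianOf_insertNth, ← insertNth_castSucc_snoc,
      Fin.insertNth_self_removeNth]
  have hR : wronskianOf δ (Fin.snoc (Function.update φ j χ) ψ) = (-1 : k) ^ (j + (m + 1) : ℕ) •
      wronskianOf δ (Fin.snoc (Fin.snoc S ψ : Fin (m + 1) → A) χ) := by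
    rw [← Fin.val_castSucc j, ← wronskianOf_insertNth, ← insertNth_castSucc_snoc,
      Fin.insertNth_removeNth]
  have hpotential : q + (m + 1 : ℕ) * δ p = q + m * δ p + δ p := by
    push_cast
    ring
  rw [hE, hA, hQ, hR, hpotential, darbouxForm_smul_smul, key]
  simp only [smul_mul_smul_comm]
  module

end Domain

end Derivation

lemma coeff_X_pow_mul_iterate_derivative {R : Type*} [CommSemiring R] (i n : ℕ) (f : R[X]) :
    (X ^ i * derivative^[i] f).coeff n = n.descFactorial i * f.coeff n := by
  rw [coeff_X_pow_mul']
  split_ifs with h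
  · rw [coeff_iterate_derivative, Nat.sub_add_cancel h, nsmul_eq_mul]
  · simp [Nat.descFactorial_of_lt (not_le.mp h)]

lemma natDegree_X_pow_mul_iterate_derivative_le {R : Type*} [CommSemiring R] (i : ℕ) (f : R[X]) :
    (X ^ i * derivative^[i] f).natDegree ≤ f.natDegree :=
  natDegree_le_iff_coeff_eq_zero.mpr fun n hn => by
    rw [coeff_X_pow_mul_iterate_derivative, coeff_eq_zero_of_natDegree_lt hn, mul_zero]

lemma coeff_prod_sum_of_natDegree_le {R ι : Type*} [CommSemiring R] (s : Finset ι) {f : ι → R[X]}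
    {b : ι → ℕ} (h : ∀ i ∈ s, (f i).natDegree ≤ b i) :
    (∏ i ∈ s, f i).coeff (∑ i ∈ s, b i) = ∏ i ∈ s, (f i).coeff (b i) := by
  induction s using Finset.cons_induction with
  | empty => simp
  | cons a s ha ih =>
    obtain ⟨hfa, hs⟩ := (Finset.forall_mem_cons ha _).mp h
    rw [Finset.prod_cons, Finset.sum_cons, Finset.prod_cons, ← ih hs]
    exact coeff_mul_add_eq_of_natDegree_le hfa
      ((natDegree_prod_le s f).trans (Finset.sum_le_sum hs))

lemma coeff_det_sum_of_natDegree_le {R n : Type*} [CommRing R] [Fintype n] [DecidableEq n]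
    {B : Matrix n n R[X]} {b : n → ℕ} (h : ∀ i j, (B i j).natDegree ≤ b j) :
    B.det.coeff (∑ j, b j) = (Matrix.of fun i j => (B i j).coeff (b j)).det := by
  rw [Matrix.det_apply, Matrix.det_apply, finsetSum_coeff]
  refine Finset.sum_congr rfl fun σ _ => ?_
  rw [coeff_smul, coeff_prod_sum_of_natDegree_le _ fun j _ => h (σ j) j]
  rfl

section CharZero

variable {R : Type*} [CommRing R] [IsDomain R] [CharZero R]

lemma det_descFactorial_ne_zero {m : ℕ} {s : Fin m → ℕ} (hs : Function.Injective s) :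
    (Matrix.of fun i j : Fin m => ((s j).descFactorial i : R)).det ≠ 0 := by
  have hvandermonde : (Matrix.vandermonde fun j => (s j : R)).det =
      (Matrix.of fun i j : Fin m => ((s j).descFactorial i : R)).det := by
    rw [Matrix.det_eval_matrixOfPolynomials_eq_det_vandermonde _
      (fun i : Fin m => descPochhammer R i) (fun _ => descPochhammer_natDegree ..)
      (fun _ => monic_descPochhammer ..), ← Matrix.det_transpose]
    simp only [descPochhammer_eval_eq_descFactorial]
    rfl
  rw [← hvandermonde]
  exact Matrix.det_vandermonde_ne_zero_iff.mpr (Nat.cast_injective.comp hs)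

/-- Once row `i` is multiplied by `X ^ i`, column `j` has degree at most `(f j).natDegree`, and its
leading coefficients form a multiple of a column of a generalised Vandermonde matrix. -/
lemma wronskianOf_derivative'_ne_zero {m : ℕ} {f : Fin m → R[X]} (hf : ∀ j, f j ≠ 0)
    (hdeg : Function.Injective fun j => (f j).natDegree) :
    wronskianOf (derivative' : Derivation R R[X] R[X]) f ≠ 0 := by
  let B : Matrix (Fin m) (Fin m) R[X] :=
    Matrix.of fun i j : Fin m => X ^ (i : ℕ) * derivative^[i] (f j)
  have hB : B.det = (∏ i : Fin m, X ^ (i : ℕ)) * wronskianOf derivative' f :=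
    Matrix.det_mul_column _ _
  have hBdeg (i j) : (B i j).natDegree ≤ (f j).natDegree :=
    natDegree_X_pow_mul_iterate_derivative_le i (f j)
  have hcoeff : B.det.coeff (∑ j, (f j).natDegree) = (∏ j, (f j).leadingCoeff) *
      (Matrix.of fun i j : Fin m => ((f j).natDegree.descFactorial i : R)).det := by
    rw [coeff_det_sum_of_natDegree_le hBdeg, ← Matrix.det_mul_row]
    simp [B, coeff_X_pow_mul_iterate_derivative, mul_comm]
  intro h
  rw [hB, h, mul_zero, coeff_zero] at hcoeff
  exact mul_ne_zero (Finset.prod_ne_zero_iff.mpr fun j _ => leadingCoeff_ne_zero.mpr (hf j))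
    (det_descFactorial_ne_zero hdeg) hcoeff.symm

end CharZero

lemma hermiteP_succ (n : ℕ) :
    hermiteP (n + 1) = 2 * X * hermiteP n - derivative (hermiteP n) := rfl

lemma derivative_hermiteP_succ (n : ℕ) :
    derivative (hermiteP (n + 1)) = 2 * (n + 1) * hermiteP n := by
  induction n with
  | zero => simp [hermiteP]
  | succ n ih =>
    have hderiv : derivative (derivative (hermiteP (n + 1))) =
        2 * (n + 1) * derivative (hermiteP n) := by
      simp [ih]
    rw [hermiteP_succ (n + 1), derivative_sub, derivative_mul, hderiv, ih]
    simp only [derivative_mul, derivative_ofNat, derivative_X, hermiteP_succ n]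
    push_cast
    ring

lemma secondOrderOp_hermiteP (n : ℕ) :
    secondOrderOp derivative' (-(2 * X)) 0 (hermiteP n) = (-(2 * n) : ℝ) • hermiteP n := by
  cases n with
  | zero => simp [secondOrderOp, hermiteP]
  | succ n =>
    have hderiv : derivative ((2 * (n + 1) : ℝ[X]) * hermiteP n) =
        2 * (n + 1) * derivative (hermiteP n) := by
      simp
    simp only [secondOrderOp, derivative'_apply, derivative_hermiteP_succ, hderiv, smul_eq_C_mul,
      map_neg, map_mul, map_ofNat, map_natCast]
    rw [hermiteP_succ]
    push_cast
    ring

lemma natDegree_hermiteP_le (n : ℕ) : (hermiteP n).natDegree ≤ n := by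
  induction n with
  | zero => simp [hermiteP]
  | succ n ih =>
    refine (natDegree_sub_le_of_le (m := n + 1) (n := n) ?_ ?_).trans (by simp)
    · compute_degree
      omega
    · exact (natDegree_derivative_le _).trans (by omega)

lemma coeff_hermiteP_self (n : ℕ) : (hermiteP n).coeff n = 2 ^ n := by
  induction n with
  | zero => simp [hermiteP]
  | succ n ih =>
    have hderiv : (derivative (hermiteP n)).coeff (n + 1) = 0 := by
      rw [coeff_derivative, coeff_eq_zero_of_natDegree_lt, zero_mul]
      linarith [natDegree_hermiteP_le n]
    rw [hermiteP_succ, coeff_sub, hderiv, mul_assoc, coeff_ofNat_mul, coeff_X_mul, ih, pow_succ']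
    ring

lemma natDegree_hermiteP (n : ℕ) : (hermiteP n).natDegree = n :=
  natDegree_eq_of_le_of_coeff_ne_zero (natDegree_hermiteP_le n) (by simp [coeff_hermiteP_self])

lemma hermiteP_ne_zero (n : ℕ) : hermiteP n ≠ 0 := fun h => by
  have hcoeff := coeff_hermiteP_self n
  rw [h, coeff_zero] at hcoeff
  exact pow_ne_zero n two_ne_zero hcoeff.symm

theorem KA_hermite_basic_equation_exchanged_general {M : ℕ} (N : ℕ) {d : Fin M → ℕ}
    (hd : Function.Injective d) (j : Fin M) (ε : ℕ) :
    XiHermite (Function.update d j ε) *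
        (-(derivative (derivative (KAHermite d N))) + 2 * X * derivative (KAHermite d N)) +
      2 * derivative (XiHermite (Function.update d j ε)) * derivative (KAHermite d N) -
      derivative (derivative (XiHermite (Function.update d j ε))) * KAHermite d N -
      2 * X * derivative (XiHermite (Function.update d j ε)) * KAHermite d N +
      C (2 * (M : ℝ) - 2 * ((d j : ℝ) + ε - N)) * XiHermite (Function.update d j ε) *
        KAHermite d N =
    C (4 * ((N : ℝ) - d j)) * KAHermite (Function.update d j ε) N * XiHermite d := by
  cases M with
  | zero => exact j.elim0
  | succ m =>
    have hW : wronskianOf derivative' (j.removeNth fun i => hermiteP (d i)) ≠ 0 :=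
      wronskianOf_derivative'_ne_zero (fun i => hermiteP_ne_zero _) <| by
        simp only [Fin.removeNth, natDegree_hermiteP]
        exact hd.comp Fin.succAbove_right_injective
    have key := darbouxForm_wronskianOf_exchange hW (fun i => secondOrderOp_hermiteP (d i))
      (secondOrderOp_hermiteP ε) (secondOrderOp_hermiteP N)
    have hupd : Function.update (fun i => hermiteP (d i)) j (hermiteP ε) =
        fun i => hermiteP (Function.update d j ε i) :=
      (Function.comp_update hermiteP d j ε).symm
    rw [hupd] at key
    change darbouxForm derivative' _ _ (XiHermite (Function.update d j ε)) (KAHermite d N) =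
      _ • (XiHermite (Function.update d j ε) * KAHermite d N) +
        _ • (KAHermite (Function.update d j ε) N * XiHermite d) at key
    simp only [darbouxForm, derivative'_apply, smul_eq_C_mul, map_add, map_sub, map_neg, map_mul,
      map_ofNat, map_natCast, derivative_mul, derivative_ofNat, derivative_X] at key ⊢
    push_cast at key ⊢
    linear_combination -key

/-- **The basic equation with the roles of `D` and `D′` exchanged**:
`Ξ_{D′}·(H̃_{D′} P_{D,N} − Ẽ(D)·P_{D,N}) = ℰ″(D)·P_{D′,N}·Ξ_D` for the Krein–Adler
Hermite system, multiplied through by `Ξ_{D′}` to give a polynomial identity, with the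
same eigenvalue `Ẽ = 2(d_j + ε − N)` and coefficient `E″ = 4(N − d_j)`. -/
theorem KA_hermite_basic_equation_exchanged
    (M N : ℕ) (d : Fin M → ℕ) (hpos : ∀ k, 0 < d k) (hmono : StrictMono d)
    (hN : ∀ k, N ≠ d k)
    (j : Fin M) (ε : ℕ) (hε : ε < d j) (hεD : ∀ k, ε ≠ d k)
    (Etil E'' : ℝ)
    (hEtil : Etil = 2 * ((d j : ℝ) + (ε : ℝ) - (N : ℝ)))
    (hE'' : E'' = 4 * ((N : ℝ) - (d j : ℝ))) :
    XiHermite (Function.update d j ε) *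
        (-(Polynomial.derivative (Polynomial.derivative (KAHermite d N))) +
          2 * Polynomial.X * Polynomial.derivative (KAHermite d N)) +
      2 * Polynomial.derivative (XiHermite (Function.update d j ε)) *
        Polynomial.derivative (KAHermite d N) -
      Polynomial.derivative (Polynomial.derivative (XiHermite (Function.update d j ε))) *
        KAHermite d N -
      2 * Polynomial.X * Polynomial.derivative (XiHermite (Function.update d j ε)) *
        KAHermite d N +
      Polynomial.C (2 * (M : ℝ) - Etil) * XiHermite (Function.update d j ε) * KAHermite d N
    = Polynomial.C E'' * KAHermite (Function.update d j ε) N * XiHermite d := by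
  subst hEtil hE''
  exact KA_hermite_basic_equation_exchanged_general N hmono.injective j ε
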